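/- arXiv:2206.11079 — 3 statements merged into one kernel-verified Lean document; each statement's English description precedes it below -/
import Mathlib

section
/- Suppose the data are noiseless (X = Y). Suppose for every k ∈ [K]: n_k ≥ d_k + 1, Y^{(k)} is in general position, and every column of Y^{(k)} has positive distance to each of its external subspaces of dimension at most d_k. Then for every i ∈ [n], every optimal solution z* of the problem min ‖z‖_0 subject to y_i = Y z and z_i = 0 satisfies: every nonzero entry of z* is at an index j such that y_j lies in the same subspace S_k as y_i (the subspace detection property holds). -/
/-! The support `T` of an optimal `z` is a smallest set of columns, avoiding the index `i`, whose
span contains `Y i`.  By minimality its columns are linearly independent, and `|T| ≤ d_k` (with `k`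
the group of `i`) because any `d_k` other columns of group `k` already span `S k`.  If `T` left
group `k` and no column in it were equal to `Y i`, then `span T` would be an external subspace of
dimension at most `d_k` containing `Y i`, at distance `0`.

There remains the possibility that a copy `Y j = Y i` of the point is in `T`.  Then `T = {j}` by
minimality and `Y i ≠ 0`.  If `j` belonged to another group, both groups would have dimension one
(`dim_le_one_of_copy`): in a group of dimension at least two, the copy could replace `Y i` in a
basis of `S k`, and this basis would span an external subspace containing another column of the
group.  Hence both subspaces would be the line through `Y i`, contradicting distinctness. -/

open scoped BigOperators
open MeasureTheory ProbabilityTheory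

noncomputable section

abbrev Vec (d : ℕ) : Type := EuclideanSpace ℝ (Fin d)

/-- number of nonzero entries of a vector -/
def l0 {n : ℕ} (β : Fin n → ℝ) : ℕ := (Finset.univ.filter fun j => β j ≠ 0).card

/-- support of a vector as a finset -/
def supp {n : ℕ} (β : Fin n → ℝ) : Finset (Fin n) := Finset.univ.filter fun j => β j ≠ 0

/-- X β, the linear combination of the columns of X with coefficients β -/
def combo {d n : ℕ} (X : Fin n → Vec d) (β : Fin n → ℝ) : Vec d := ∑ j, β j • X j

/-- distance from a point to a subspace -/
def distS {d : ℕ} (x : Vec d) (H : Submodule ℝ (Vec d)) : ℝ := Metric.infDist x (H : Set (Vec d))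

/-- smallest singular value of the submatrix of `X` with columns indexed by `s` -/
def sigmaMin {d n : ℕ} (X : Fin n → Vec d) (s : Finset (Fin n)) : ℝ :=
  sInf {c | ∃ u : Fin n → ℝ, (∀ j ∉ s, u j = 0) ∧ ∑ j, (u j)^2 = 1 ∧ c = ‖∑ j, u j • X j‖}

/-- σ_{Y,r} -/
def sigmaYr {d n : ℕ} (Y : Fin n → Vec d) (r : ℕ) : ℝ :=
  sInf {c | ∃ s : Finset (Fin n), s.card = r ∧
    LinearIndependent ℝ (fun j : s => Y j.1) ∧ c = sigmaMin Y s}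

/-- σ̄_{Y,r} = σ_{Y,r}/√r -/
def sigmaBarYr {d n : ℕ} (Y : Fin n → Vec d) (r : ℕ) : ℝ := sigmaYr Y r / Real.sqrt r

/-- σ_{X,r₀} := min{σ_min(X_β) : 1 ≤ ‖β‖₀ ≤ r₀} -/
def sigmaXUpTo {d n : ℕ} (X : Fin n → Vec d) (r0 : ℕ) : ℝ :=
  sInf {c | ∃ s : Finset (Fin n), 1 ≤ s.card ∧ s.card ≤ r0 ∧ c = sigmaMin X s}

/-- H is an external subspace of the point `Y i` of dimension at most `r` -/
def IsExternal {d n K : ℕ} (Y : Fin n → Vec d) (assign : Fin n → Fin K) (i : Fin n) (r : ℕ)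
    (H : Submodule ℝ (Vec d)) : Prop :=
  ∃ s : Finset (Fin n), s.card ≤ r ∧ LinearIndependent ℝ (fun j : s => Y j.1) ∧
    ¬ (∀ j ∈ s, assign j = assign i) ∧ (∀ j ∈ s, Y j ≠ Y i) ∧
    H = Submodule.span ℝ (Y '' ↑s)

/-- the columns of `Y` in group `k` are in general position -/
def GeneralPositionGroup {d n K : ℕ} (Y : Fin n → Vec d) (assign : Fin n → Fin K)
    (dk : Fin K → ℕ) (k : Fin K) : Prop :=
  ∀ s : Finset (Fin n), (∀ j ∈ s, assign j = k) → s.card ≤ dk k →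
    LinearIndependent ℝ (fun j : s => Y j.1)

/-- M_i : minimum distance of `Y i` to its external subspaces of dimension ≤ r -/
def Mi {d n K : ℕ} (Y : Fin n → Vec d) (assign : Fin n → Fin K) (i : Fin n) (r : ℕ) : ℝ :=
  sInf {m | ∃ H, IsExternal Y assign i r H ∧ m = distS (Y i) H}

/-- β is an optimal solution of the noisy ℓ⁰-SSC problem for the i-th column of X -/
def NoisyL0Opt {d n : ℕ} (X : Fin n → Vec d) (i : Fin n) (lam : ℝ) (β : Fin n → ℝ) : Prop :=
  β i = 0 ∧ ∀ γ : Fin n → ℝ, γ i = 0 →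
    ‖X i - combo X β‖^2 + lam * l0 β ≤ ‖X i - combo X γ‖^2 + lam * l0 γ

/-- t-th largest singular value via Courant–Fischer -/
def singVal {m n : ℕ} (A : Fin n → Vec m) (t : ℕ) : ℝ :=
  sSup {c | ∃ V : Submodule ℝ (EuclideanSpace ℝ (Fin n)), Module.finrank ℝ V = t ∧
    c = sInf {e | ∃ v ∈ V, ‖v‖ = 1 ∧ e = ‖∑ j, v j • A j‖}}

/-- μ is the uniform (rotation-invariant) probability distribution on the unit sphere of S -/
def UniformOnSphere {d : ℕ} (S : Submodule ℝ (Vec d)) (μ : Measure (Vec d)) : Prop :=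
  IsProbabilityMeasure μ ∧ (∀ᵐ y ∂μ, y ∈ S ∧ ‖y‖ = 1) ∧
  ∀ g : Vec d ≃ₗᵢ[ℝ] Vec d, (∀ v ∈ S, g v ∈ S) → Measure.map g μ = μ

lemma span_eq_of_card {d n K : ℕ} (Y : Fin n → Vec d)
    (S : Fin K → Submodule ℝ (Vec d)) (dk : Fin K → ℕ) (assign : Fin n → Fin K)
    (hmem : ∀ j, Y j ∈ S (assign j))
    (hdim : ∀ k, Module.finrank ℝ (S k) = dk k)
    (hgp : ∀ k, GeneralPositionGroup Y assign dk k)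
    (k : Fin K) (s : Finset (Fin n)) (hs : ∀ j ∈ s, assign j = k) (hc : s.card = dk k) :
    Submodule.span ℝ (Y '' ↑s) = S k := by
  apply Submodule.eq_of_le_of_finrank_eq
  · rw [Submodule.span_le]
    rintro _ ⟨j, hj, rfl⟩
    have := hmem j
    rwa [hs j hj] at this
  · have h := finrank_span_eq_card (hgp k s hs hc.le)
    have hr : Set.range (fun j : s => Y j.1) = Y '' ↑s := by
      ext x; simp
    rw [hr] at h
    rw [h, hdim, ← hc]; simp

lemma distS_eq_zero {d : ℕ} {x : Vec d} {H : Submodule ℝ (Vec d)} (h : x ∈ H) :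
    distS x H = 0 :=
  Metric.infDist_zero_of_mem h

/-- A column with a copy in another group can only lie in a group of dimension at most one. -/
lemma dim_le_one_of_copy {d n K : ℕ} (Y : Fin n → Vec d)
    (S : Fin K → Submodule ℝ (Vec d)) (dk : Fin K → ℕ) (assign : Fin n → Fin K)
    (hmem : ∀ j, Y j ∈ S (assign j))
    (hdim : ∀ k, Module.finrank ℝ (S k) = dk k)
    (hnk : ∀ k, dk k + 1 ≤ (Finset.univ.filter fun j => assign j = k).card)
    (hgp : ∀ k, GeneralPositionGroup Y assign dk k)
    (hext : ∀ i : Fin n, ∀ H : Submodule ℝ (Vec d),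
      IsExternal Y assign i (dk (assign i)) H → 0 < distS (Y i) H)
    (i j : Fin n) (hij : assign j ≠ assign i) (hY : Y j = Y i) : dk (assign i) ≤ 1 := by
  by_contra! hd
  have hne : ∀ x m, assign x = assign i → assign m = assign i → x ≠ m → Y x ≠ Y m := by
    intro x m hx hm hxm he
    have hli := hgp (assign i) {x, m} (by simp [hx, hm]) (by rw [Finset.card_pair hxm]; omega)
    have := hli.injective (a₁ := ⟨x, by simp⟩) (a₂ := ⟨m, by simp⟩) he
    exact hxm (by simpa using this)
  obtain ⟨t, ht, htc⟩ := Finset.exists_subset_card_eq (n := dk (assign i))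
    (s := (Finset.univ.filter fun j => assign j = assign i).erase i) (by
      rw [Finset.card_erase_of_mem (by simp)]
      have := hnk (assign i)
      omega)
  have htg : ∀ x ∈ t, x ≠ i ∧ assign x = assign i := by
    intro x hx
    simpa using ht hx
  obtain ⟨m, hm⟩ : t.Nonempty := by
    rw [← Finset.card_pos]; omega
  have hiu : i ∉ t.erase m := fun h => (htg i (Finset.mem_of_mem_erase h)).1 rfl
  have hju : j ∉ t.erase m := fun h => hij (htg j (Finset.mem_of_mem_erase h)).2
  have hcu : (t.erase m).card + 1 = dk (assign i) := by
    rw [Finset.card_erase_add_one hm, htc]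
  -- the basis with `i` and the one with its copy `j` have the same underlying vectors
  have himg : Y '' ↑(insert j (t.erase m)) = Y '' ↑(insert i (t.erase m)) := by
    rw [Finset.coe_insert, Finset.coe_insert, Set.image_insert_eq, Set.image_insert_eq, hY]
  have hspan : Submodule.span ℝ (Y '' ↑(insert j (t.erase m))) = S (assign i) := by
    rw [himg]
    apply span_eq_of_card Y S dk assign hmem hdim hgp
    · intro x hx
      rcases Finset.mem_insert.1 hx with rfl | hx
      · rfl
      · exact (htg x (Finset.mem_of_mem_erase hx)).2
    · rw [Finset.card_insert_of_notMem hiu, hcu]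
  have hcj : (insert j (t.erase m)).card = dk (assign i) := by
    rw [Finset.card_insert_of_notMem hju, hcu]
  have hma := (htg m hm).2
  have hpos := hext m (Submodule.span ℝ (Y '' ↑(insert j (t.erase m))))
    ⟨insert j (t.erase m), by rw [hma, hcj], by
      rw [linearIndependent_iff_card_eq_finrank_span, Set.finrank]
      have hr : Set.range (fun x : ↥(insert j (t.erase m)) => Y x.1)
          = Y '' ↑(insert j (t.erase m)) := by
        ext x; simp [and_comm]
      rw [hr, hspan, hdim, Fintype.card_coe, hcj], by
      intro h
      exact hij ((h j (Finset.mem_insert_self _ _)).trans hma), by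
      intro x hx
      rcases Finset.mem_insert.1 hx with rfl | hx
      · rw [hY]
        exact hne i m rfl hma (htg m hm).1.symm
      · exact hne x m (htg x (Finset.mem_of_mem_erase hx)).2 hma (Finset.ne_of_mem_erase hx), rfl⟩
  rw [distS_eq_zero] at hpos
  · exact lt_irrefl _ hpos
  · rw [hspan, ← hma]; exact hmem m

/-- A set of columns whose span contains `x` yields a representation of `x` supported on it. -/
lemma exists_combo_of_mem_span {d n : ℕ} (Y : Fin n → Vec d) (s : Finset (Fin n)) (x : Vec d)
    (hx : x ∈ Submodule.span ℝ (Y '' ↑s)) :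
    ∃ w : Fin n → ℝ, (∀ j ∉ s, w j = 0) ∧ x = combo Y w ∧ l0 w ≤ s.card := by
  classical
  obtain ⟨c, hc⟩ := (Submodule.mem_span_image_finset_iff_exists_fun ℝ).1 hx
  refine ⟨fun j => if h : j ∈ s then c ⟨j, h⟩ else 0, fun j hj => by simp [hj], ?_, ?_⟩
  · rw [combo, ← hc, ← Finset.sum_subset (Finset.subset_univ s)
      (fun j _ hj => by simp [hj]), ← Finset.sum_coe_sort s]
    simp
  · apply Finset.card_le_card
    intro j hj
    by_contra h
    simp [h] at hj

/-- Subspace detection property for noiseless ℓ⁰-SSC under the deterministic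
model (Lemma on noiseless ℓ⁰-SSC). -/
theorem stmt0 {d n K : ℕ} (Y : Fin n → Vec d)
    (S : Fin K → Submodule ℝ (Vec d)) (dk : Fin K → ℕ) (assign : Fin n → Fin K)
    (hmem : ∀ j, Y j ∈ S (assign j))
    (hdim : ∀ k, Module.finrank ℝ (S k) = dk k)
    (hdistinct : ∀ k l, k ≠ l → S k ≠ S l)
    (hnk : ∀ k, dk k + 1 ≤ (Finset.univ.filter fun j => assign j = k).card)
    (hgp : ∀ k, GeneralPositionGroup Y assign dk k)
    (hext : ∀ i : Fin n, ∀ H : Submodule ℝ (Vec d),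
      IsExternal Y assign i (dk (assign i)) H → 0 < distS (Y i) H)
    (i : Fin n) (z : Fin n → ℝ)
    (hzi : z i = 0) (hzrep : Y i = combo Y z)
    (hopt : ∀ w : Fin n → ℝ, w i = 0 → Y i = combo Y w → l0 z ≤ l0 w) :
    ∀ j, z j ≠ 0 → assign j = assign i := by
  have hmin : ∀ s : Finset (Fin n), i ∉ s → Y i ∈ Submodule.span ℝ (Y '' ↑s) →
      (supp z).card ≤ s.card := by
    intro s his hs
    obtain ⟨w, hw, hrep, hcard⟩ := exists_combo_of_mem_span Y s _ hs
    exact (hopt w (hw i his) hrep).trans hcard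
  have hT : ∀ x, x ∈ supp z ↔ z x ≠ 0 := by simp [supp]
  have hiT : i ∉ supp z := by simp [hT, hzi]
  have hspan : Y i ∈ Submodule.span ℝ (Y '' ↑(supp z)) := by
    rw [hzrep, combo]
    refine Submodule.sum_mem _ fun x _ => ?_
    by_cases hx : z x = 0
    · simp [hx]
    · exact Submodule.smul_mem _ _
        (Submodule.subset_span ⟨x, Finset.mem_coe.2 ((hT x).2 hx), rfl⟩)
  have hcard : (supp z).card ≤ dk (assign i) := by
    obtain ⟨t, ht, htc⟩ := Finset.exists_subset_card_eq (n := dk (assign i))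
      (s := (Finset.univ.filter fun j => assign j = assign i).erase i) (by
        rw [Finset.card_erase_of_mem (by simp)]
        have := hnk (assign i)
        omega)
    have htg : ∀ x ∈ t, x ≠ i ∧ assign x = assign i := by
      intro x hx
      simpa using ht hx
    rw [← htc]
    apply hmin t (fun h => (htg i h).1 rfl)
    rw [span_eq_of_card Y S dk assign hmem hdim hgp _ t (fun x hx => (htg x hx).2) htc]
    exact hmem i
  have hli : LinearIndependent ℝ (fun x : supp z => Y x.1) := by
    rw [linearIndependent_iff_notMem_span]
    intro x hx
    -- a redundant column could be dropped from the support without shrinking its span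
    have hx' : Y x.1 ∈ Submodule.span ℝ (Y '' ↑((supp z).erase x.1)) := by
      refine Submodule.span_mono ?_ hx
      rintro _ ⟨y, hy, rfl⟩
      refine ⟨y.1, ?_, rfl⟩
      have hne : y ≠ x := by simpa using hy
      exact Finset.mem_coe.2 (Finset.mem_erase.2 ⟨fun h => hne (Subtype.ext h), y.2⟩)
    have hle : Submodule.span ℝ (Y '' ↑(supp z))
        ≤ Submodule.span ℝ (Y '' ↑((supp z).erase x.1)) := by
      rw [Submodule.span_le]
      rintro _ ⟨y, hy, rfl⟩
      by_cases hyx : y = x.1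
      · rw [hyx]; exact hx'
      · exact Submodule.subset_span ⟨y, Finset.mem_coe.2 (Finset.mem_erase.2 ⟨hyx, hy⟩), rfl⟩
    have h1 := hmin _ (fun h => hiT (Finset.mem_of_mem_erase h)) (hle hspan)
    exact absurd h1 (not_le.2 (Finset.card_erase_lt_of_mem x.2))
  by_cases hcopy : ∃ j ∈ supp z, Y j = Y i
  · obtain ⟨j, hj, hY⟩ := hcopy
    have hji : i ≠ j := fun h => hiT (h ▸ hj)
    have h1 := hmin {j} (by simpa using hji) (by
      rw [← hY]; exact Submodule.subset_span ⟨j, by simp, rfl⟩)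
    rw [Finset.card_singleton] at h1
    have hY0 : Y j ≠ 0 := hli.ne_zero ⟨j, hj⟩
    intro x hx
    obtain rfl : x = j := Finset.card_le_one.1 h1 x ((hT x).2 hx) j hj
    by_contra hne
    have hline : ∀ y, dk (assign y) ≤ 1 → Y y ≠ 0 →
        Submodule.span ℝ {Y y} = S (assign y) := by
      intro y hy hy0
      apply Submodule.eq_of_le_of_finrank_le
      · rw [Submodule.span_le, Set.singleton_subset_iff]; exact hmem y
      · rw [hdim, finrank_span_singleton hy0]; exact hy
    have hi1 := dim_le_one_of_copy Y S dk assign hmem hdim hnk hgp hext i x hne hY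
    have hx1 := dim_le_one_of_copy Y S dk assign hmem hdim hnk hgp hext x i (Ne.symm hne) hY.symm
    apply hdistinct _ _ hne
    rw [← hline x hx1 hY0, ← hline i hi1 (hY ▸ hY0), hY]
  · by_contra hcon
    have hpos := hext i (Submodule.span ℝ (Y '' ↑(supp z)))
      ⟨supp z, hcard, hli, fun h => hcon fun x hx => h x ((hT x).2 hx),
        fun x hx he => hcopy ⟨x, hx, he⟩, rfl⟩
    rw [distS_eq_zero hspan] at hpos
    exact lt_irrefl _ hpos
end
end

section
/- Let λ > 0, X ∈ ℝ^{d×n}, x_i the i-th column of X, and let β* be an optimal solution of the noisy ℓ⁰-SSC problem for x_i. Then the columns of X indexed by supp(β*) are linearly independent, i.e. X_{β*} has full column rank. -/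
/-!
An optimal solution cannot waste a nonzero coefficient. If the columns indexed by `supp βstar`
satisfied a nontrivial linear relation `∑ c j • X j = 0`, with `c j₀ ≠ 0` and `c` supported in
`supp βstar`, then subtracting from `βstar` the multiple of `c` that cancels the coordinate `j₀`
would leave `combo X βstar`, hence the residual, unchanged, while the support would lose `j₀` and
gain nothing. Since `lam > 0`, this strictly lowers the objective (`l0_sub_lt`, `combo_sub_smul`).
-/

open scoped BigOperators
open MeasureTheory ProbabilityTheory

noncomputable section

/-- Moving along a linear relation among the columns does not change the fitted vector. -/
lemma combo_sub_smul {d n : ℕ} (X : Fin n → Vec d) (β c : Fin n → ℝ) (t : ℝ)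
    (hc : combo X c = 0) : combo X (β - t • c) = combo X β := by
  unfold combo at *
  simp only [Pi.sub_apply, Pi.smul_apply, smul_eq_mul, sub_smul, mul_smul,
    Finset.sum_sub_distrib, ← Finset.smul_sum, hc, smul_zero, sub_zero]

/-- Cancelling the coordinate `j₀` of `β` with a vector supported inside `supp β` strictly
shrinks the support. -/
lemma l0_sub_lt {n : ℕ} (β c : Fin n → ℝ) (hsub : ∀ j, β j = 0 → c j = 0)
    (j₀ : Fin n) (hj₀ : c j₀ ≠ 0) : l0 (β - (β j₀ / c j₀) • c) < l0 β := by
  unfold l0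
  apply Finset.card_lt_card
  rw [Finset.ssubset_iff_of_subset]
  · refine ⟨j₀, ?_, ?_⟩
    · simpa using fun h => hj₀ (hsub j₀ h)
    · simp [div_mul_cancel₀ _ hj₀]
  · intro j hj
    simp only [Finset.mem_filter, Finset.mem_univ, true_and] at hj ⊢
    intro h
    exact hj (by simp [h, hsub j h])

/-- the columns of X indexed by the support of an optimal solution of the
noisy ℓ⁰-SSC problem are linearly independent. -/
theorem stmt10 {d n : ℕ} (lam : ℝ) (hlam : 0 < lam)
    (X : Fin n → Vec d) (i : Fin n) (βstar : Fin n → ℝ)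
    (hopt : NoisyL0Opt X i lam βstar) :
    LinearIndependent ℝ (fun j : (supp βstar : Finset (Fin n)) => X j.1) := by
  classical
  by_contra hdep
  obtain ⟨g, hg, ⟨j₀, hmem⟩, hj₀⟩ := Fintype.not_linearIndependent_iff.mp hdep
  -- Extend the relation by zero to all columns.
  let c : Fin n → ℝ := fun j => if h : j ∈ supp βstar then g ⟨j, h⟩ else 0
  have hc : combo X c = 0 := by
    unfold combo
    rw [← hg, ← Finset.sum_subset (Finset.subset_univ (supp βstar))
      (fun j _ hj => by simp [c, hj]), ← Finset.sum_coe_sort]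
    exact Finset.sum_congr rfl fun j _ => by simp [c]
  have hsub : ∀ j, βstar j = 0 → c j = 0 := fun j hj => by simp [c, supp, hj]
  have hcj₀ : c j₀ ≠ 0 := by simpa [c, hmem] using hj₀
  have hlt : (l0 (βstar - (βstar j₀ / c j₀) • c) : ℝ) < l0 βstar := by
    exact_mod_cast l0_sub_lt βstar c hsub j₀ hcj₀
  have hle := hopt.2 (βstar - (βstar j₀ / c j₀) • c) (by simp [hopt.1, hsub i hopt.1])
  rw [combo_sub_smul X βstar c _ hc] at hle
  linarith [mul_lt_mul_of_pos_left hlt hlam]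
end
end

section
/- Let λ > 0, X ∈ ℝ^{d×n} with every column of unit ℓ²-norm, x_i the i-th column of X, and let β* be a nonzero optimal solution of the noisy ℓ⁰-SSC problem for x_i with r* = ‖β*‖_0 and c* = ‖x_i − Xβ*‖_2, and suppose X_{β*} has full column rank. Then c* ≤ √(1 − λ r*) < 1, ‖β*‖_2 ≤ 2/σ_min(X_{β*}), and ‖β*‖_1 ≤ 2√r*/σ_min(X_{β*}); moreover, if X = Y + N with ‖n_j‖_2 ≤ δ for every column n_j of N, then ‖N β*‖_2 ≤ 2δ√r*/σ_min(X_{β*}). -/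
/-!
Comparing the optimal `β` with the feasible point `0` gives `c² + λ r ≤ ‖x_i‖² = 1`, hence
`c ≤ √(1 - λ r) < 1` and, by the triangle inequality, `‖X β‖ ≤ ‖x_i‖ + c ≤ 2`. All the other
bounds follow from `σ_min(X_β) ‖β‖₂ ≤ ‖X β‖` (`sigmaMin_mul_le`), where `σ_min(X_β)` may be
divided out because it is positive when the active columns are independent (`sigmaMin_pos`);
the `ℓ¹` bound adds Cauchy–Schwarz on the support (`sum_abs_le_sqrt_l0_mul`).
-/

open scoped BigOperators
open MeasureTheory ProbabilityTheory

noncomputable section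

lemma sum_sq_pos {n : ℕ} {β : Fin n → ℝ} (hne : β ≠ 0) : 0 < ∑ j, (β j)^2 := by
  obtain ⟨j, hj⟩ := Function.ne_iff.mp hne
  exact Finset.sum_pos' (fun k _ => sq_nonneg _) ⟨j, Finset.mem_univ _, sq_pos_of_ne_zero hj⟩

/-- Rescaling a nonzero `β` supported in `s` gives a competitor in the infimum defining
`sigmaMin X s`. -/
lemma normalized_mem {d n : ℕ} (X : Fin n → Vec d) (s : Finset (Fin n)) {β : Fin n → ℝ}
    (hne : β ≠ 0) (hs : ∀ j ∉ s, β j = 0) :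
    ‖combo X β‖ / Real.sqrt (∑ j, (β j)^2) ∈ {c | ∃ u : Fin n → ℝ, (∀ j ∉ s, u j = 0) ∧
      ∑ j, (u j)^2 = 1 ∧ c = ‖∑ j, u j • X j‖} := by
  have hpos := sum_sq_pos hne
  have hsq := Real.sqrt_pos.mpr hpos
  refine ⟨fun j => (Real.sqrt (∑ j, (β j)^2))⁻¹ * β j, fun j hj => by simp [hs j hj], ?_, ?_⟩
  · simp only [mul_pow, ← Finset.mul_sum, inv_pow]
    rw [Real.sq_sqrt hpos.le, inv_mul_cancel₀ hpos.ne']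
  · simp only [mul_smul, ← Finset.smul_sum]
    rw [norm_smul, Real.norm_of_nonneg (inv_nonneg.mpr hsq.le), combo, div_eq_inv_mul]

lemma sigmaMin_mul_le {d n : ℕ} (X : Fin n → Vec d) (s : Finset (Fin n)) {β : Fin n → ℝ}
    (hne : β ≠ 0) (hs : ∀ j ∉ s, β j = 0) :
    sigmaMin X s * Real.sqrt (∑ j, (β j)^2) ≤ ‖combo X β‖ := by
  rw [← le_div_iff₀ (Real.sqrt_pos.mpr (sum_sq_pos hne))]
  refine csInf_le ⟨0, ?_⟩ (normalized_mem X s hne hs)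
  rintro _ ⟨u, -, -, rfl⟩
  exact norm_nonneg _

/-- An injective linear map on a finite-dimensional space is bounded below. The nonzero `β`
rules out `s = ∅`, where the infimum is over the empty set and has the junk value `0`. -/
lemma sigmaMin_pos {d n : ℕ} (X : Fin n → Vec d) (s : Finset (Fin n)) {β : Fin n → ℝ}
    (hne : β ≠ 0) (hs : ∀ j ∉ s, β j = 0)
    (hrank : LinearIndependent ℝ (fun j : s => X j.1)) : 0 < sigmaMin X s := by
  let f : EuclideanSpace ℝ s →ₗ[ℝ] Vec d :=
    (Fintype.linearCombination ℝ (fun j : s => X j.1)) ∘ₗ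
      (WithLp.linearEquiv 2 ℝ (s → ℝ)).toLinearMap
  have hf : Function.Injective f :=
    (hrank.fintypeLinearCombination_injective).comp
      (WithLp.linearEquiv 2 ℝ (s → ℝ)).injective
  obtain ⟨K, hK, hanti⟩ := f.exists_antilipschitzWith (LinearMap.ker_eq_bot.mpr hf)
  have hK' : (0 : ℝ) < K := hK
  refine lt_of_lt_of_le (inv_pos.mpr hK') (le_csInf ⟨_, normalized_mem X s hne hs⟩ ?_)
  rintro _ ⟨u, hu, hu1, rfl⟩
  have key := hanti.le_mul_dist (WithLp.toLp 2 (fun j : s => u j.1)) 0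
  have h1 : ∑ j : s, (u j.1)^2 = 1 := by
    rw [Finset.sum_coe_sort s (fun j => (u j)^2), ← hu1]
    exact Finset.sum_subset (Finset.subset_univ s) (fun j _ hj => by simp [hu j hj])
  have h2 : f (WithLp.toLp 2 (fun j : s => u j.1)) = ∑ j, u j • X j := by
    change Fintype.linearCombination ℝ (fun j : s => X j.1) (fun j : s => u j.1) = _
    rw [Fintype.linearCombination_apply, Finset.sum_coe_sort s (fun j => u j • X j)]
    exact Finset.sum_subset (Finset.subset_univ s) (fun j _ hj => by simp [hu j hj])
  rw [map_zero, dist_zero_right, dist_zero_right, h2, EuclideanSpace.norm_eq] at key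
  simp only [Real.norm_eq_abs, sq_abs, h1, Real.sqrt_one] at key
  rwa [inv_le_iff_one_le_mul₀' hK']

lemma sum_abs_le_sqrt_l0_mul {n : ℕ} (β : Fin n → ℝ) :
    ∑ j, |β j| ≤ Real.sqrt (l0 β) * Real.sqrt (∑ j, (β j)^2) := by
  rw [← Real.sqrt_mul (Nat.cast_nonneg _)]
  apply Real.le_sqrt_of_sq_le
  have e1 : ∑ j, |β j| = ∑ j ∈ Finset.univ.filter (fun j => β j ≠ 0), |β j| := by
    symm
    exact Finset.sum_subset (Finset.subset_univ _) (fun j _ hj => by simpa using hj)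
  have e2 : ∑ j, (β j)^2 = ∑ j ∈ Finset.univ.filter (fun j => β j ≠ 0), |β j|^2 := by
    symm
    simp only [sq_abs]
    exact Finset.sum_subset (Finset.subset_univ _) (fun j _ hj => by simpa using hj)
  rw [e1, e2]
  exact sq_sum_le_card_mul_sum_sq

/-- basic bounds on an optimal solution of the noisy ℓ⁰-SSC problem:
c* ≤ √(1 − λr*) < 1, ‖β*‖₂ ≤ 2/σ_min(X_{β*}), ‖β*‖₁ ≤ 2√r*/σ_min(X_{β*}),
and ‖Nβ*‖₂ ≤ 2δ√r*/σ_min(X_{β*}). -/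
theorem stmt19 {d n : ℕ} (lam : ℝ) (hlam : 0 < lam)
    (X : Fin n → Vec d) (hunit : ∀ j, ‖X j‖ = 1)
    (i : Fin n) (βstar : Fin n → ℝ) (hne : βstar ≠ 0)
    (hopt : NoisyL0Opt X i lam βstar)
    (rstar : ℕ) (hr : rstar = l0 βstar)
    (cstar : ℝ) (hc : cstar = ‖X i - combo X βstar‖)
    (hrank : LinearIndependent ℝ (fun j : (supp βstar : Finset (Fin n)) => X j.1)) :
    (cstar ≤ Real.sqrt (1 - lam * rstar) ∧ Real.sqrt (1 - lam * rstar) < 1) ∧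
    Real.sqrt (∑ j, (βstar j)^2) ≤ 2 / sigmaMin X (supp βstar) ∧
    (∑ j, |βstar j|) ≤ 2 * Real.sqrt rstar / sigmaMin X (supp βstar) ∧
    ∀ (Y Nv : Fin n → Vec d) (δ : ℝ), (∀ j, X j = Y j + Nv j) → (∀ j, ‖Nv j‖ ≤ δ) →
      ‖∑ j, βstar j • Nv j‖ ≤ 2 * δ * Real.sqrt rstar / sigmaMin X (supp βstar) := by
  subst hr hc
  have hs : ∀ j ∉ supp βstar, βstar j = 0 := fun j hj => by simpa [supp] using hj
  have hσ := sigmaMin_pos X _ hne hs hrank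
  have hmul := sigmaMin_mul_le X _ hne hs
  have hopt0 : ‖X i - combo X βstar‖^2 + lam * l0 βstar ≤ 1 := by
    simpa [combo, l0, hunit] using hopt.2 0 rfl
  have hr1 : (0 : ℝ) < l0 βstar := by
    obtain ⟨j, hj⟩ := Function.ne_iff.mp hne
    exact_mod_cast Finset.card_pos.mpr ⟨j, by simpa using hj⟩
  have hlr : 0 < lam * l0 βstar := mul_pos hlam hr1
  have hc1 : ‖X i - combo X βstar‖ ≤ Real.sqrt (1 - lam * l0 βstar) :=
    Real.le_sqrt_of_sq_le (by linarith)
  have hsq1 : Real.sqrt (1 - lam * l0 βstar) < 1 := by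
    rw [Real.sqrt_lt' one_pos]
    linarith
  have hX2 : ‖combo X βstar‖ ≤ 2 := by
    have h := norm_sub_le (X i) (X i - combo X βstar)
    rw [sub_sub_cancel, hunit] at h
    linarith
  have hl2 : Real.sqrt (∑ j, (βstar j)^2) ≤ 2 / sigmaMin X (supp βstar) := by
    rw [le_div_iff₀' hσ]
    exact hmul.trans hX2
  have hl1 : ∑ j, |βstar j| ≤ 2 * Real.sqrt (l0 βstar) / sigmaMin X (supp βstar) :=
    calc ∑ j, |βstar j| ≤ Real.sqrt (l0 βstar) * Real.sqrt (∑ j, (βstar j)^2) :=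
          sum_abs_le_sqrt_l0_mul βstar
      _ ≤ Real.sqrt (l0 βstar) * (2 / sigmaMin X (supp βstar)) := by gcongr
      _ = _ := by ring
  refine ⟨⟨hc1, hsq1⟩, hl2, hl1, fun Y Nv δ _ hN => ?_⟩
  have hδ : 0 ≤ δ := (norm_nonneg _).trans (hN i)
  calc ‖∑ j, βstar j • Nv j‖ ≤ ∑ j, |βstar j| * δ := by
        refine norm_sum_le_of_le _ fun j _ => ?_
        rw [norm_smul, Real.norm_eq_abs]
        exact mul_le_mul_of_nonneg_left (hN j) (abs_nonneg _)
    _ = (∑ j, |βstar j|) * δ := (Finset.sum_mul _ _ _).symm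
    _ ≤ (2 * Real.sqrt (l0 βstar) / sigmaMin X (supp βstar)) * δ := by gcongr
    _ = _ := by ring
end
end
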